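/- Fix an integer n ≥ 1. Let Ω₁ ⊆ ℍ_s^n be real-path-connected, let Ω₂ ⊆ ℍ_s^n be Ω₁-stem-preserving, let c ∈ ℍ, let g : Ω₂ → ℍ be path-slice, let γ ∈ 𝒫(ℂ^n, Ω₁) and let I ∈ 𝕊(Ω₁, γ), with q := γ^I(1). Then (c, I·c)·F_{Ω₁}^g(γ) = (c, −I·c)·F_{Ω₁}^g(γ̄) = (c, ℑ(q)·c)·ℱ_{Ω₁}^g(q), where γ̄ denotes the componentwise complex-conjugate path of γ. -/

import Mathlib

open scoped ENNReal NNReal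

noncomputable section

/-- The real quaternions. -/
abbrev ℍ := Quaternion ℝ

/-- The set `𝕊` of imaginary units of the quaternions. -/
def QS : Set ℍ := {I | I ^ 2 = -1}

/-- `Ψ_i^I : ℂ^n → ℂ_I^n ⊆ ℍ^n`, sending `x + y i` to `x + y I` componentwise. -/
def PsiI (n : ℕ) (I : ℍ) (z : Fin n → ℂ) : Fin n → ℍ :=
  fun ℓ => algebraMap ℝ ℍ (z ℓ).re + (z ℓ).im • I

/-- The slice `ℂ_I^n = (ℝ + ℝ I)^n ⊆ ℍ^n`. -/
def sliceCn (n : ℕ) (I : ℍ) : Set (Fin n → ℍ) := Set.range (PsiI n I)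

/-- The weakly slice cone `ℍ_s^n = ⋃_{I ∈ 𝕊} ℂ_I^n`. -/
def weakSliceCone (n : ℕ) : Set (Fin n → ℍ) := ⋃ I ∈ QS, sliceCn n I

/-- `Ω` is slice open (i.e. `Ω ∈ τ_s(ℍ_s^n)`): `Ω ⊆ ℍ_s^n` and each slice
`Ω_I = Ω ∩ ℂ_I^n` is open in `ℂ_I^n`, encoded via the homeomorphism `Ψ_i^I`. -/
def sliceOpen (n : ℕ) (Ω : Set (Fin n → ℍ)) : Prop :=
  Ω ⊆ weakSliceCone n ∧ ∀ I ∈ QS, IsOpen (PsiI n I ⁻¹' Ω)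

/-- The set `𝒫(ℂ^n)` of continuous paths `[0,1] → ℂ^n` with real start point,
encoded as functions `ℝ → ℂ^n` continuous on `[0,1]`. -/
def PathsC (n : ℕ) : Set (ℝ → Fin n → ℂ) :=
  {γ | ContinuousOn γ (Set.Icc 0 1) ∧ ∀ ℓ, (γ 0 ℓ).im = 0}

/-- `γ^I([0,1]) ⊆ Ω`. -/
def pathInSlice (n : ℕ) (Ω : Set (Fin n → ℍ)) (I : ℍ) (γ : ℝ → Fin n → ℂ) : Prop :=
  ∀ t ∈ Set.Icc (0 : ℝ) 1, PsiI n I (γ t) ∈ Ω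

/-- The set `𝕊(Ω, γ) = {I ∈ 𝕊 : γ^I ⊆ Ω}`. -/
def sliceUnits (n : ℕ) (Ω : Set (Fin n → ℍ)) (γ : ℝ → Fin n → ℂ) : Set ℍ :=
  {I | I ∈ QS ∧ pathInSlice n Ω I γ}

/-- The set `𝒫(ℂ^n, Ω)`. -/
def PathsIn (n : ℕ) (Ω : Set (Fin n → ℍ)) : Set (ℝ → Fin n → ℂ) :=
  {γ | γ ∈ PathsC n ∧ ∃ I, I ∈ sliceUnits n Ω γ}

/-- The straight segment `𝓛_z^w(t) = (1 - t)z + tw`. -/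
def segPath (n : ℕ) (z w : Fin n → ℂ) : ℝ → Fin n → ℂ :=
  fun t => (1 - t) • z + t • w

/-- Concatenation of paths. -/
def concatP (n : ℕ) (γ δ : ℝ → Fin n → ℂ) : ℝ → Fin n → ℂ :=
  fun t => if t ≤ 1 / 2 then γ (2 * t) else δ (2 * t - 1)

/-- `𝓛_γ(z) := γ ∘ 𝓛_{γ(1)}^z`, the extension of `γ` by the segment from `γ(1)` to `z`. -/
def extendPath (n : ℕ) (γ : ℝ → Fin n → ℂ) (z : Fin n → ℂ) : ℝ → Fin n → ℂ :=
  concatP n γ (segPath n (γ 1) z)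

/-- The ball `B_{𝒫(ℂ^n)}(γ, r)` in path space. -/
def pathBall (n : ℕ) (γ : ℝ → Fin n → ℂ) (r : ℝ) : Set (ℝ → Fin n → ℂ) :=
  {β | ∃ z ∈ Metric.ball (γ 1) r, β = extendPath n γ z}

/-- `B_I(c^I, r) ⊆ Ω_I`, encoded via `Ψ_i^I`. -/
def ballInSlice (n : ℕ) (Ω : Set (Fin n → ℍ)) (I : ℍ) (c : Fin n → ℂ) (r : ℝ) : Prop :=
  ∀ w ∈ Metric.ball c r, PsiI n I w ∈ Ω

/-- `r_{γ,Ω}`, as an extended nonnegative real. -/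
def rPath (n : ℕ) (Ω : Set (Fin n → ℍ)) (γ : ℝ → Fin n → ℂ) : ℝ≥0∞ :=
  sSup {x : ℝ≥0∞ | ∃ r : ℝ≥0, x = r ∧ pathBall n γ r ⊆ PathsIn n Ω}

/-- `r^{𝕊'}_{γ,Ω}`, as an extended nonnegative real. -/
def rSliceSet (n : ℕ) (Ω : Set (Fin n → ℍ)) (γ : ℝ → Fin n → ℂ) (S' : Set ℍ) : ℝ≥0∞ :=
  sSup {x : ℝ≥0∞ | ∃ r : ℝ≥0, x = r ∧ ∀ I ∈ S', ballInSlice n Ω I (γ 1) r}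

/-- `r²_{γ,Ω}`, as an extended nonnegative real. -/
def r2Slice (n : ℕ) (Ω : Set (Fin n → ℍ)) (γ : ℝ → Fin n → ℂ) : ℝ≥0∞ :=
  sSup {x : ℝ≥0∞ | ∃ S'' : Set ℍ, S'' ⊆ sliceUnits n Ω γ ∧ S''.Nontrivial ∧ x = rSliceSet n Ω γ S''}

/-- `r^I_{γ,Ω}`, as an extended nonnegative real. -/
def rISlice (n : ℕ) (Ω : Set (Fin n → ℍ)) (γ : ℝ → Fin n → ℂ) (I : ℍ) : ℝ≥0∞ :=
  sSup {x : ℝ≥0∞ | ∃ r : ℝ≥0, x = r ∧ ballInSlice n Ω I (γ 1) r}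

/-- `Ω` is real-path-connected. -/
def realPathConnected (n : ℕ) (Ω : Set (Fin n → ℍ)) : Prop :=
  ∀ q ∈ Ω, ∃ γ ∈ PathsIn n Ω, ∃ I ∈ sliceUnits n Ω γ, PsiI n I (γ 1) = q

/-- `Ω₂` is `Ω₁`-stem-preserving. -/
def stemPreserving (n : ℕ) (Ω₁ Ω₂ : Set (Fin n → ℍ)) : Prop :=
  (∀ γ ∈ PathsIn n Ω₁, (sliceUnits n Ω₂ γ).Nontrivial) ∧
  (∀ α ∈ PathsIn n Ω₁, ∀ β ∈ PathsIn n Ω₁, α 1 = β 1 →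
    ¬ ∃ I, sliceUnits n Ω₂ α ∩ sliceUnits n Ω₂ β = {I})

/-- `F : 𝒫(ℂ^n, Ω) → ℍ^{2×1}` is a (path-slice) stem function of `f`:
`f(γ^I(1)) = (1, I)·F(γ)`. -/
def isStemOf (n : ℕ) (Ω : Set (Fin n → ℍ)) (f : (Fin n → ℍ) → ℍ)
    (F : (ℝ → Fin n → ℂ) → ℍ × ℍ) : Prop :=
  ∀ γ ∈ PathsIn n Ω, ∀ I ∈ sliceUnits n Ω γ, f (PsiI n I (γ 1)) = (F γ).1 + I * (F γ).2

/-- `f` is a path-slice function on `Ω`. -/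
def PathSliceFn (n : ℕ) (Ω : Set (Fin n → ℍ)) (f : (Fin n → ℍ) → ℍ) : Prop :=
  ∃ F, isStemOf n Ω f F

/-- `f` is (weakly) slice regular on `Ω`: each restriction `f_I` is real differentiable
and satisfies the Cauchy-Riemann equations `(∂/∂x_ℓ + I ∂/∂y_ℓ) f_I = 0`. -/
def SliceRegular (n : ℕ) (Ω : Set (Fin n → ℍ)) (f : (Fin n → ℍ) → ℍ) : Prop :=
  ∀ I ∈ QS,
    DifferentiableOn ℝ (fun z => f (PsiI n I z)) (PsiI n I ⁻¹' Ω) ∧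
    ∀ z ∈ PsiI n I ⁻¹' Ω, ∀ ℓ : Fin n,
      fderivWithin ℝ (fun z => f (PsiI n I z)) (PsiI n I ⁻¹' Ω) z (Pi.single ℓ 1)
        + I * fderivWithin ℝ (fun z => f (PsiI n I z)) (PsiI n I ⁻¹' Ω) z
            (Pi.single ℓ Complex.I) = 0

open Classical in
/-- `F_{Ω₁}^f` : a choice of stem function of the path-slice function `f : Ω₂ → ℍ`
(its restriction to `𝒫(ℂ^n, Ω₁)` is independent of the choice). -/
def stemF (n : ℕ) (Ω₂ : Set (Fin n → ℍ)) (f : (Fin n → ℍ) → ℍ) :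
    (ℝ → Fin n → ℂ) → ℍ × ℍ :=
  if h : ∃ F, isStemOf n Ω₂ f F then h.choose else fun _ => 0

open Classical in
/-- The map `ℑ : ℍ_s^n → 𝕊 ∪ {0}`. -/
def scrI {n : ℕ} (q : Fin n → ℍ) : ℍ :=
  if h : (Finset.univ.filter fun ℓ : Fin n => Quaternion.im (q ℓ) ≠ 0).Nonempty then
    ‖Quaternion.im (q ((Finset.univ.filter
        fun ℓ : Fin n => Quaternion.im (q ℓ) ≠ 0).min' h))‖⁻¹ •
      Quaternion.im (q ((Finset.univ.filter
        fun ℓ : Fin n => Quaternion.im (q ℓ) ≠ 0).min' h))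
  else 0

open Classical in
/-- The map `ℱ_{Ω₁}^g : Ω₁ → ℍ^{2×1}`. -/
def scrF (n : ℕ) (Ω₁ Ω₂ : Set (Fin n → ℍ)) (g : (Fin n → ℍ) → ℍ) (q : Fin n → ℍ) :
    ℍ × ℍ :=
  if h : (∃ ℓ, Quaternion.im (q ℓ) ≠ 0) ∧
      ∃ γ, γ ∈ PathsIn n Ω₁ ∧ pathInSlice n Ω₁ (scrI q) γ ∧ PsiI n (scrI q) (γ 1) = q then
    stemF n Ω₂ g h.2.choose
  else (g q, 0)

/-- The `*`-product `(f*g)(q) = (f(q), ℑ(q)f(q))·ℱ_{Ω₁}^g(q)`. -/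
def starProd (n : ℕ) (Ω₁ Ω₂ : Set (Fin n → ℍ)) (f g : (Fin n → ℍ) → ℍ) :
    (Fin n → ℍ) → ℍ :=
  fun q => f q * (scrF n Ω₁ Ω₂ g q).1 + scrI q * f q * (scrF n Ω₁ Ω₂ g q).2

/-- Componentwise complex conjugate of a path. -/
def conjPath (n : ℕ) (γ : ℝ → Fin n → ℂ) : ℝ → Fin n → ℂ :=
  fun t ℓ => starRingEnd ℂ (γ t ℓ)

end

/-!
A stem value `F(γ) = (a, b)` is determined by the values `a + L * b` of `f` at two units
`L ∈ 𝕊(Ω, γ)`. If `α` and `β` end at the same point and `I ∈ 𝕊(Ω₁, α) ∩ 𝕊(Ω₁, β)`, then the path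
running along `α` and back along `β` lies in `𝒫(ℂ^n, Ω₁)`, and its units in `Ω₂` are
`𝕊(Ω₂, α) ∩ 𝕊(Ω₂, β)`; so this intersection has at least two elements, and `F(α) = F(β)`.
Likewise `γ̄^{-L} = γ^L` gives `F(γ̄) = (a, -b)`, and `b = 0` if `γ(1)` is real. Since `ℑ(γ^I(1))`
is `I`, `-I` or `0`, the value `ℱ(γ^I(1))` is respectively `F(γ)`, `F(γ̄)` or `(a, 0)`.
-/

section Algebra

theorem eq_of_nontrivial_of_forall_add_mul_eq {R : Type*} [Ring R] [NoZeroDivisors R] {S : Set R}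
    (hS : S.Nontrivial) {v w : R × R} (h : ∀ L ∈ S, v.1 + L * v.2 = w.1 + L * w.2) : v = w := by
  obtain ⟨J, hJ, K, hK, hJK⟩ := hS
  have hprod : (J - K) * (v.2 - w.2) = 0 := by
    calc (J - K) * (v.2 - w.2)
        = (v.1 + J * v.2 - (w.1 + J * w.2)) - (v.1 + K * v.2 - (w.1 + K * w.2)) := by noncomm_ring
      _ = 0 := by rw [h J hJ, h K hK, sub_self, sub_self, sub_zero]
  have hsnd : v.2 = w.2 :=
    sub_eq_zero.1 ((mul_eq_zero.1 hprod).resolve_left (sub_ne_zero.2 hJK))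
  have hfst : v.1 = w.1 := by simpa only [hsnd, add_left_inj] using h J hJ
  exact Prod.ext hfst hsnd

theorem inv_norm_smul_smul_eq_or_eq_neg {E : Type*} [NormedAddCommGroup E] [NormedSpace ℝ E]
    {u : E} (hu : ‖u‖ = 1) {y : ℝ} (hy : y ≠ 0) :
    ‖y • u‖⁻¹ • y • u = u ∨ ‖y • u‖⁻¹ • y • u = -u := by
  rw [norm_smul, hu, mul_one, Real.norm_eq_abs, smul_smul]
  rcases abs_choice y with habs | habs <;> rw [habs]
  · exact Or.inl (by rw [inv_mul_cancel₀ hy, one_smul])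
  · exact Or.inr (by rw [inv_neg, neg_mul, inv_mul_cancel₀ hy, neg_one_smul])

end Algebra

section ImaginaryUnits

variable {I : ℍ}

theorem neg_mem_QS : -I ∈ QS ↔ I ∈ QS := by
  simp only [QS, Set.mem_ofPred_eq, neg_sq]

theorem norm_eq_one_of_mem_QS (hI : I ∈ QS) : ‖I‖ = 1 := by
  have hsq : ‖I‖ ^ 2 = 1 := by
    rw [← norm_pow, show I ^ 2 = -1 from hI, norm_neg, norm_one]
  exact (pow_eq_one_iff_of_nonneg (norm_nonneg I) two_ne_zero).1 hsq

theorem ne_zero_of_mem_QS (hI : I ∈ QS) : I ≠ 0 :=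
  norm_ne_zero_iff.1 (by rw [norm_eq_one_of_mem_QS hI]; exact one_ne_zero)

theorem re_eq_zero_of_mem_QS (hI : I ∈ QS) : I.re = 0 := by
  rw [← Quaternion.sq_eq_neg_normSq, Quaternion.normSq_eq_norm_mul_self,
    norm_eq_one_of_mem_QS hI, mul_one, Quaternion.coe_one]
  exact hI

end ImaginaryUnits

section Slices

variable {n : ℕ} {I : ℍ} {z : Fin n → ℂ}

theorem PsiI_neg_star (I : ℍ) (z : Fin n → ℂ) : PsiI n (-I) (star z) = PsiI n I z := by
  funext ℓ
  simp [PsiI]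

theorem PsiI_eq_PsiI_of_im_eq_zero (hz : ∀ ℓ, (z ℓ).im = 0) (I J : ℍ) :
    PsiI n I z = PsiI n J z := by
  funext ℓ
  simp only [PsiI, hz ℓ, zero_smul]

theorem re_PsiI (hI : I ∈ QS) (z : Fin n → ℂ) (ℓ : Fin n) : (PsiI n I z ℓ).re = (z ℓ).re := by
  simp [PsiI, re_eq_zero_of_mem_QS hI]

theorem im_PsiI (hI : I ∈ QS) (z : Fin n → ℂ) (ℓ : Fin n) :
    (PsiI n I z ℓ).im = (z ℓ).im • I := by
  ext <;> simp [PsiI, re_eq_zero_of_mem_QS hI]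

theorem im_PsiI_eq_zero_iff (hI : I ∈ QS) {ℓ : Fin n} :
    (PsiI n I z ℓ).im = 0 ↔ (z ℓ).im = 0 := by
  rw [im_PsiI hI, smul_eq_zero_iff_left (ne_zero_of_mem_QS hI)]

theorem PsiI_injective (hI : I ∈ QS) : Function.Injective (PsiI n I) := by
  intro z w hzw
  funext ℓ
  have him : (z ℓ).im • I = (w ℓ).im • I := by rw [← im_PsiI hI, ← im_PsiI hI, hzw]
  refine Complex.ext ?_ (smul_left_injective ℝ (ne_zero_of_mem_QS hI) him)
  rw [← re_PsiI hI z, ← re_PsiI hI w, hzw]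

theorem scrI_of_im_eq_zero {q : Fin n → ℍ} (hq : ∀ ℓ, (q ℓ).im = 0) : scrI q = 0 := by
  classical
  exact dif_neg fun ⟨ℓ, hℓ⟩ => (Finset.mem_filter.1 hℓ).2 (hq ℓ)

theorem exists_scrI_eq_of_im_ne_zero {q : Fin n → ℍ} (hq : ∃ ℓ, (q ℓ).im ≠ 0) :
    ∃ ℓ, (q ℓ).im ≠ 0 ∧ scrI q = ‖(q ℓ).im‖⁻¹ • (q ℓ).im := by
  classical
  have hne : (Finset.univ.filter fun ℓ : Fin n => (q ℓ).im ≠ 0).Nonempty := by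
    simpa only [Finset.filter_nonempty_iff, Finset.mem_univ, true_and] using hq
  refine ⟨_, (Finset.mem_filter.1 (Finset.min'_mem _ hne)).2, ?_⟩
  unfold scrI
  convert dif_pos hne

theorem scrI_PsiI_eq_or_eq_neg (hI : I ∈ QS) (hz : ∃ ℓ, (z ℓ).im ≠ 0) :
    scrI (PsiI n I z) = I ∨ scrI (PsiI n I z) = -I := by
  obtain ⟨ℓ, hℓ, hscrI⟩ := exists_scrI_eq_of_im_ne_zero (q := PsiI n I z)
    (hz.imp fun _ => (im_PsiI_eq_zero_iff hI).not.2)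
  rw [hscrI, im_PsiI hI]
  exact inv_norm_smul_smul_eq_or_eq_neg (norm_eq_one_of_mem_QS hI)
    ((im_PsiI_eq_zero_iff hI).not.1 hℓ)

end Slices

section Paths

variable {n : ℕ} {Ω Ω₁ Ω₂ : Set (Fin n → ℍ)} {α β γ δ : ℝ → Fin n → ℂ} {I : ℍ}

/-- The path `γ` run backwards, for `γ` parametrized by `[0,1]`. -/
def reversePath (n : ℕ) (γ : ℝ → Fin n → ℂ) : ℝ → Fin n → ℂ :=
  fun t => γ (1 - t)

theorem continuousOn_reversePath (hγ : ContinuousOn γ (Set.Icc 0 1)) :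
    ContinuousOn (reversePath n γ) (Set.Icc 0 1) :=
  hγ.comp (by fun_prop) fun _ => Set.Icc.one_sub_mem

theorem sliceUnits_reversePath : sliceUnits n Ω (reversePath n γ) = sliceUnits n Ω γ := by
  ext L
  refine and_congr_right fun _ => ⟨fun h t ht => ?_, fun h t ht => ?_⟩
  · simpa only [reversePath, sub_sub_cancel] using h (1 - t) (Set.Icc.one_sub_mem ht)
  · exact h (1 - t) (Set.Icc.one_sub_mem ht)

theorem concatP_of_le {t : ℝ} (ht : t ≤ 1 / 2) : concatP n γ δ t = γ (2 * t) :=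
  if_pos ht

theorem concatP_of_ge (h : γ 1 = δ 0) {t : ℝ} (ht : 1 / 2 ≤ t) :
    concatP n γ δ t = δ (2 * t - 1) := by
  rcases ht.eq_or_lt with rfl | hlt
  · norm_num [concatP, h]
  · exact if_neg hlt.not_ge

theorem continuousOn_concatP (hγ : ContinuousOn γ (Set.Icc 0 1))
    (hδ : ContinuousOn δ (Set.Icc 0 1)) (h : γ 1 = δ 0) :
    ContinuousOn (concatP n γ δ) (Set.Icc 0 1) := by
  have hleft : ContinuousOn (concatP n γ δ) (Set.Icc 0 (1 / 2)) :=
    (hγ.comp (by fun_prop) fun _ => (unitInterval.mul_pos_mem_iff two_pos).2).congr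
      fun _ ht => concatP_of_le ht.2
  have hright : ContinuousOn (concatP n γ δ) (Set.Icc (1 / 2) 1) :=
    (hδ.comp (by fun_prop) fun _ => unitInterval.two_mul_sub_one_mem_iff.2).congr
      fun _ ht => concatP_of_ge h ht.1
  rw [← Set.Icc_union_Icc_eq_Icc (b := (1 / 2 : ℝ)) (by norm_num) (by norm_num)]
  exact hleft.union_of_isClosed hright isClosed_Icc isClosed_Icc

theorem concatP_mem_PathsC (hγ : γ ∈ PathsC n) (hδ : ContinuousOn δ (Set.Icc 0 1))
    (h : γ 1 = δ 0) : concatP n γ δ ∈ PathsC n := by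
  refine ⟨continuousOn_concatP hγ.1 hδ h, fun ℓ => ?_⟩
  rw [concatP_of_le (by norm_num), mul_zero]
  exact hγ.2 ℓ

theorem sliceUnits_concatP (h : γ 1 = δ 0) :
    sliceUnits n Ω (concatP n γ δ) = sliceUnits n Ω γ ∩ sliceUnits n Ω δ := by
  ext L
  constructor
  · rintro ⟨hL, hmem⟩
    refine ⟨⟨hL, fun t ht => ?_⟩, hL, fun t ht => ?_⟩
    · have := hmem (t / 2) ⟨by linarith [ht.1], by linarith [ht.2]⟩
      rwa [concatP_of_le (by linarith [ht.2]), mul_div_cancel₀ t two_ne_zero] at this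
    · have := hmem ((t + 1) / 2) ⟨by linarith [ht.1], by linarith [ht.2]⟩
      rwa [concatP_of_ge h (by linarith [ht.1]), mul_div_cancel₀ _ two_ne_zero,
        add_sub_cancel_right] at this
  · rintro ⟨⟨hL, hγ⟩, -, hδ⟩
    refine ⟨hL, fun t ht => ?_⟩
    rcases le_total t (1 / 2) with hle | hge
    · rw [concatP_of_le hle]
      exact hγ _ ((unitInterval.mul_pos_mem_iff two_pos).2 ⟨ht.1, hle⟩)
    · rw [concatP_of_ge h hge]
      exact hδ _ (unitInterval.two_mul_sub_one_mem_iff.2 ⟨hge, ht.2⟩)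

theorem conjPath_mem_PathsC (hγ : γ ∈ PathsC n) : conjPath n γ ∈ PathsC n :=
  ⟨hγ.1.star, fun ℓ => by simp [conjPath, hγ.2 ℓ]⟩

theorem PsiI_neg_conjPath (I : ℍ) (γ : ℝ → Fin n → ℂ) (t : ℝ) :
    PsiI n (-I) (conjPath n γ t) = PsiI n I (γ t) :=
  PsiI_neg_star I (γ t)

theorem neg_mem_sliceUnits_conjPath :
    -I ∈ sliceUnits n Ω (conjPath n γ) ↔ I ∈ sliceUnits n Ω γ := by
  simp only [sliceUnits, pathInSlice, Set.mem_ofPred_eq, neg_mem_QS, PsiI_neg_conjPath]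

theorem nontrivial_sliceUnits_inter
    (hΩ : ∀ γ ∈ PathsIn n Ω₁, (sliceUnits n Ω₂ γ).Nontrivial)
    (hα : α ∈ PathsC n) (hβ : β ∈ PathsC n) (hαβ : α 1 = β 1)
    (hIα : I ∈ sliceUnits n Ω₁ α) (hIβ : I ∈ sliceUnits n Ω₁ β) :
    (sliceUnits n Ω₂ α ∩ sliceUnits n Ω₂ β).Nontrivial := by
  have hmeet : α 1 = reversePath n β 0 := by rw [hαβ, reversePath, sub_zero]
  have hunits : ∀ Ω, sliceUnits n Ω (concatP n α (reversePath n β)) =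
      sliceUnits n Ω α ∩ sliceUnits n Ω β := fun Ω => by
    rw [sliceUnits_concatP hmeet, sliceUnits_reversePath]
  rw [← hunits]
  refine hΩ _ ⟨concatP_mem_PathsC hα (continuousOn_reversePath hβ.1) hmeet, I, ?_⟩
  rw [hunits]
  exact ⟨hIα, hIβ⟩

end Paths

section StemFunctions

variable {n : ℕ} {Ω Ω₁ Ω₂ : Set (Fin n → ℍ)} {f g : (Fin n → ℍ) → ℍ}
  {F : (ℝ → Fin n → ℂ) → ℍ × ℍ} {α β γ : ℝ → Fin n → ℂ}

theorem isStemOf_stemF (hg : PathSliceFn n Ω g) : isStemOf n Ω g (stemF n Ω g) := by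
  have hchosen : stemF n Ω g = Exists.choose hg := dif_pos hg
  rw [hchosen]
  exact Exists.choose_spec hg

theorem isStemOf.apply_eq_of_forall (hF : isStemOf n Ω f F) (hγ : γ ∈ PathsC n) {S : Set ℍ}
    (hS : S.Nontrivial) (hSγ : S ⊆ sliceUnits n Ω γ) {v : ℍ × ℍ}
    (hv : ∀ L ∈ S, f (PsiI n L (γ 1)) = v.1 + L * v.2) : F γ = v :=
  eq_of_nontrivial_of_forall_add_mul_eq hS fun L hL => by
    rw [← hF γ ⟨hγ, L, hSγ hL⟩ L (hSγ hL), hv L hL]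

theorem isStemOf.apply_eq_apply_of_endpoint_eq (hF : isStemOf n Ω f F) (hα : α ∈ PathsC n)
    (hβ : β ∈ PathsC n) (hαβ : α 1 = β 1) (hS : (sliceUnits n Ω α ∩ sliceUnits n Ω β).Nontrivial) :
    F α = F β :=
  hF.apply_eq_of_forall hα hS Set.inter_subset_left fun L hL => by
    rw [hαβ, hF β ⟨hβ, L, hL.2⟩ L hL.2]

theorem isStemOf.apply_eq_conjPath (hF : isStemOf n Ω f F) (hγ : γ ∈ PathsC n)
    (hS : (sliceUnits n Ω γ).Nontrivial) :
    F γ = ((F (conjPath n γ)).1, -(F (conjPath n γ)).2) :=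
  hF.apply_eq_of_forall hγ hS subset_rfl fun L hL => by
    have hL' := neg_mem_sliceUnits_conjPath.2 hL
    rw [← PsiI_neg_conjPath, hF _ ⟨conjPath_mem_PathsC hγ, -L, hL'⟩ (-L) hL', neg_mul_comm]

theorem isStemOf.apply_eq_of_im_eq_zero (hF : isStemOf n Ω f F) (hγ : γ ∈ PathsC n)
    (hS : (sliceUnits n Ω γ).Nontrivial) (him : ∀ ℓ, (γ 1 ℓ).im = 0) (I : ℍ) :
    F γ = (f (PsiI n I (γ 1)), 0) :=
  hF.apply_eq_of_forall hγ hS subset_rfl fun L _ => by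
    rw [PsiI_eq_PsiI_of_im_eq_zero him L I, mul_zero, add_zero]

theorem scrF_of_im_eq_zero {q : Fin n → ℍ} (hq : ∀ ℓ, (q ℓ).im = 0) :
    scrF n Ω₁ Ω₂ g q = (g q, 0) :=
  dif_neg fun h => h.1.elim fun ℓ hℓ => hℓ (hq ℓ)

theorem exists_scrF_eq_stemF {q : Fin n → ℍ} (hq : ∃ ℓ, (q ℓ).im ≠ 0)
    (hpath : ∃ δ ∈ PathsIn n Ω₁, pathInSlice n Ω₁ (scrI q) δ ∧ PsiI n (scrI q) (δ 1) = q) :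
    ∃ δ ∈ PathsIn n Ω₁, pathInSlice n Ω₁ (scrI q) δ ∧ PsiI n (scrI q) (δ 1) = q ∧
      scrF n Ω₁ Ω₂ g q = stemF n Ω₂ g δ :=
  have ⟨hδ, hslice, hend⟩ := hpath.choose_spec
  ⟨hpath.choose, hδ, hslice, hend, dif_pos ⟨hq, hpath⟩⟩

theorem scrF_PsiI_eq_stemF (hΩ : ∀ γ ∈ PathsIn n Ω₁, (sliceUnits n Ω₂ γ).Nontrivial)
    (hg : PathSliceFn n Ω₂ g) (hγ : γ ∈ PathsC n) {I : ℍ} (hI : I ∈ sliceUnits n Ω₁ γ)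
    (hscrI : scrI (PsiI n I (γ 1)) = I) :
    scrF n Ω₁ Ω₂ g (PsiI n I (γ 1)) = stemF n Ω₂ g γ := by
  have hnonreal : ∃ ℓ, (PsiI n I (γ 1) ℓ).im ≠ 0 := by
    by_contra! hreal
    exact ne_zero_of_mem_QS hI.1 (hscrI.symm.trans (scrI_of_im_eq_zero hreal))
  obtain ⟨δ, hδ, hIδ, hend, hscrF⟩ := exists_scrF_eq_stemF (Ω₂ := Ω₂) (g := g) hnonreal
    ⟨γ, ⟨hγ, I, hI⟩, by rw [hscrI]; exact hI.2, by rw [hscrI]⟩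
  rw [hscrI] at hIδ hend
  have hδγ : δ 1 = γ 1 := PsiI_injective hI.1 hend
  rw [hscrF]
  exact (isStemOf_stemF hg).apply_eq_apply_of_endpoint_eq hδ.1 hγ hδγ
    (nontrivial_sliceUnits_inter hΩ hδ.1 hγ hδγ ⟨hI.1, hIδ⟩ hI)

end StemFunctions

theorem statement13_general {n : ℕ} {Ω₁ Ω₂ : Set (Fin n → ℍ)}
    (hΩ : ∀ γ ∈ PathsIn n Ω₁, (sliceUnits n Ω₂ γ).Nontrivial)
    (c : ℍ) {g : (Fin n → ℍ) → ℍ} (hg : PathSliceFn n Ω₂ g)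
    {γ : ℝ → Fin n → ℂ} (hγ : γ ∈ PathsC n) {I : ℍ} (hI : I ∈ sliceUnits n Ω₁ γ) :
    c * (stemF n Ω₂ g γ).1 + I * c * (stemF n Ω₂ g γ).2
        = c * (stemF n Ω₂ g (conjPath n γ)).1
          + (-I) * c * (stemF n Ω₂ g (conjPath n γ)).2 ∧
    c * (stemF n Ω₂ g γ).1 + I * c * (stemF n Ω₂ g γ).2
        = c * (scrF n Ω₁ Ω₂ g (PsiI n I (γ 1))).1
          + scrI (PsiI n I (γ 1)) * c * (scrF n Ω₁ Ω₂ g (PsiI n I (γ 1))).2 := by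
  have hstem := isStemOf_stemF hg
  have hS : (sliceUnits n Ω₂ γ).Nontrivial := hΩ γ ⟨hγ, I, hI⟩
  have hconj : c * (stemF n Ω₂ g γ).1 + I * c * (stemF n Ω₂ g γ).2
      = c * (stemF n Ω₂ g (conjPath n γ)).1
        + (-I) * c * (stemF n Ω₂ g (conjPath n γ)).2 := by
    rw [hstem.apply_eq_conjPath hγ hS, mul_neg, neg_mul, neg_mul]
  refine ⟨hconj, ?_⟩
  by_cases hreal : ∀ ℓ, (γ 1 ℓ).im = 0
  · rw [scrF_of_im_eq_zero fun ℓ => (im_PsiI_eq_zero_iff hI.1).2 (hreal ℓ),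
      hstem.apply_eq_of_im_eq_zero hγ hS hreal I, mul_zero, mul_zero]
  push Not at hreal
  rcases scrI_PsiI_eq_or_eq_neg hI.1 hreal with hscrI | hscrI
  · rw [scrF_PsiI_eq_stemF hΩ hg hγ hI hscrI, hscrI]
  · rw [hconj, hscrI]
    rw [← PsiI_neg_conjPath] at hscrI ⊢
    rw [scrF_PsiI_eq_stemF hΩ hg (conjPath_mem_PathsC hγ)
      (neg_mem_sliceUnits_conjPath.2 hI) hscrI]

theorem statement13 (n : ℕ) (hn : 1 ≤ n) (Ω₁ Ω₂ : Set (Fin n → ℍ))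
    (hΩ₁ : Ω₁ ⊆ weakSliceCone n) (hΩ₂ : Ω₂ ⊆ weakSliceCone n)
    (hrc : realPathConnected n Ω₁) (hsp : stemPreserving n Ω₁ Ω₂)
    (c : ℍ) (g : (Fin n → ℍ) → ℍ) (hg : PathSliceFn n Ω₂ g)
    (γ : ℝ → Fin n → ℂ) (hγ : γ ∈ PathsIn n Ω₁) (I : ℍ) (hI : I ∈ sliceUnits n Ω₁ γ) :
    c * (stemF n Ω₂ g γ).1 + I * c * (stemF n Ω₂ g γ).2
        = c * (stemF n Ω₂ g (conjPath n γ)).1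
          + (-I) * c * (stemF n Ω₂ g (conjPath n γ)).2 ∧
    c * (stemF n Ω₂ g γ).1 + I * c * (stemF n Ω₂ g γ).2
        = c * (scrF n Ω₁ Ω₂ g (PsiI n I (γ 1))).1
          + scrI (PsiI n I (γ 1)) * c * (scrF n Ω₁ Ω₂ g (PsiI n I (γ 1))).2 :=
  statement13_general hsp.1 c hg hγ.1 hI
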